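/- Let k be a perfect field of characteristic p > 0, let R and S be standard graded rings over k of Krull dimensions d ≥ 2 and d' ≥ 2, and let I ⊆ R and J ⊆ S be homogeneous ideals of finite colength. Suppose f_n(R, I) converges uniformly on [0,∞) to a compactly supported continuous function f and f_n(S, J) converges uniformly to a compactly supported continuous function g. Then for every point x_0 of the set Λ = { m/p^s : m, s ∈ ℕ }, the sequence of real numbers f_n(R ⊗_k S, I ⊠ J)(x_0) = q^{1-(d+d')} · dim_k ((R ⊗_k S)/(I ⊠ J)^{[q]})_{⌊q x_0⌋} (q = p^n) converges, and its limit equals (f*g)(x_0) = ∫_0^{x_0} f(y) g(x_0 - y) dy. -/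

import Mathlib

/-!
Write `q = p ^ n`. In characteristic `p` raising to the `q`-th power is additive, so `(I ⊠ J)^{[q]}`
equals `I^{[q]} ⊠ J^{[q]}` (`frobeniusPower_boxIdeal`), and the quotient by it is
`R/I^{[q]} ⊗ S/J^{[q]}`. Both factors are graded with finite-dimensional pieces, hence the
dimension of the degree-`N` piece of the tensor product is the Cauchy product
`∑ i ≤ N, dim (R/I^{[q]})_i * dim (S/J^{[q]})_{N-i}` (`quotPieceDim_boxIdeal`).

If `x₀ = m/p^s` and `n ≥ s`, then `N = q x₀` is an integer, so the floor loses nothing and the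
Cauchy product, once normalized, is exactly the Riemann sum
`q⁻¹ ∑ i ≤ N, f_n(i/q) g_n(x₀ - i/q)` (`normHilb_tensor_eq`). Uniform convergence allows `f_n`, `g_n`
to be replaced by `f`, `g` at a uniformly small cost per term, and the resulting Riemann sums of
the uniformly continuous function `y ↦ f y * g (x₀ - y)` converge to its integral over `[0, x₀]`
(`tendsto_sum_convolution`).
-/


open scoped TensorProduct
open Filter MeasureTheory

/-- The Frobenius power `I^{[q]}`: the ideal generated by `q`-th powers of elements of `I`. -/
noncomputable def frobeniusPower {A : Type*} [CommRing A] (I : Ideal A) (q : ℕ) : Ideal A :=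
  Ideal.span ((fun a => a ^ q) '' (I : Set A))

/-- A grading `𝒜` on a commutative `k`-algebra `R` is standard if `𝒜 0 = k·1`, the degree-one
piece is finitely generated, and `𝒜 (m+1) = 𝒜 1 * 𝒜 m` for all `m`. -/
structure IsStandardGraded (k : Type*) {R : Type*} [Field k] [CommRing R] [Algebra k R]
    (𝒜 : ℕ → Submodule k R) : Prop where
  degree_zero : 𝒜 0 = 1
  fg_one : (𝒜 1).FG
  succ_eq : ∀ m : ℕ, 𝒜 (m + 1) = 𝒜 1 * 𝒜 m

/-- `dim_k` of the degree piece `P` of the quotient by `I`: the dimension of the image of `P`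
in `A ⧸ I`. -/
noncomputable def quotPieceDim (k : Type*) [Field k] {A : Type*} [CommRing A] [Algebra k A]
    (P : Submodule k A) (I : Ideal A) : ℕ :=
  Module.finrank k (P.map (Ideal.Quotient.mkₐ k I).toLinearMap)

/-- The normalized Hilbert function of the pair `(A, I)` (with grading `P`, Krull dimension `d`
and Frobenius power `q`), extended by `0` to the negative reals:
`x ↦ q^{1-d} · dim_k (A/I^{[q]})_{⌊qx⌋}`. -/
noncomputable def normHilb (k : Type*) [Field k] {A : Type*} [CommRing A] [Algebra k A]
    (P : ℕ → Submodule k A) (I : Ideal A) (d q : ℕ) : ℝ → ℝ :=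
  fun x => if x < 0 then 0 else
    (q : ℝ) ^ ((1 : ℤ) - (d : ℤ)) * quotPieceDim k (P ⌊(q : ℝ) * x⌋₊) (frobeniusPower I q)

/-- The degree-`m` piece of the tensor product grading on `R ⊗[k] S`:
`(R ⊗ S)_m = Σ_{i=0}^m R_i ⊗ S_{m-i}`. -/
noncomputable def tensorPiece (k : Type*) [Field k] {R S : Type*} [CommRing R] [CommRing S]
    [Algebra k R] [Algebra k S] (𝒜 : ℕ → Submodule k R) (ℬ : ℕ → Submodule k S) (m : ℕ) :
    Submodule k (R ⊗[k] S) :=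
  ⨆ i ∈ Finset.range (m + 1),
    (𝒜 i).map (Algebra.TensorProduct.includeLeft : R →ₐ[k] R ⊗[k] S).toLinearMap *
      (ℬ (m - i)).map (Algebra.TensorProduct.includeRight : S →ₐ[k] R ⊗[k] S).toLinearMap

/-- `I ⊠ J`: the ideal of `R ⊗[k] S` generated by the images of `I` and `J` under the
canonical inclusions. -/
noncomputable def boxIdeal (k : Type*) [Field k] {R S : Type*} [CommRing R] [CommRing S]
    [Algebra k R] [Algebra k S] (I : Ideal R) (J : Ideal S) : Ideal (R ⊗[k] S) :=
  I.map (Algebra.TensorProduct.includeLeft : R →ₐ[k] R ⊗[k] S) ⊔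
    J.map (Algebra.TensorProduct.includeRight : S →ₐ[k] R ⊗[k] S)

/-! ### Hilbert functions of tensor products -/

open Module in
/-- The degree-`N` piece of the tensor product of two graded vector spaces with finite-dimensional
pieces has the expected dimension: tensors of homogeneous basis vectors form a basis of `V ⊗ W`,
and those of total degree `N` span the piece. -/
lemma finrank_iSup_map₂_mk {k V W : Type*} [Field k] [AddCommGroup V] [AddCommGroup W]
    [Module k V] [Module k W] (A : ℕ → Submodule k V) (B : ℕ → Submodule k W)
    (hA : DirectSum.IsInternal A) (hB : DirectSum.IsInternal B)
    (hAf : ∀ i, FiniteDimensional k (A i)) (hBf : ∀ i, FiniteDimensional k (B i)) (N : ℕ) :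
    finrank k ↥(⨆ i ∈ Finset.range (N + 1),
        Submodule.map₂ (TensorProduct.mk k V W) (A i) (B (N - i))) =
      ∑ i ∈ Finset.range (N + 1), finrank k (A i) * finrank k (B (N - i)) := by
  classical
  let bA := fun i => finBasis k (A i)
  let bB := fun i => finBasis k (B i)
  let b := (hA.collectedBasis bA).tensorProduct (hB.collectedBasis bB)
  -- the basis vectors of `V ⊗ W` of total degree `N`, indexed by the degree of their first factor
  let e : (Σ i : Fin (N + 1), Fin (finrank k (A i)) × Fin (finrank k (B (N - i)))) →
      (Σ i : ℕ, Fin (finrank k (A i))) × (Σ i : ℕ, Fin (finrank k (B i))) :=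
    fun x => (⟨x.1, x.2.1⟩, ⟨N - x.1, x.2.2⟩)
  have he : Function.Injective e := by
    rintro ⟨i, a, c⟩ ⟨j, a', c'⟩ h
    obtain ⟨h1, h2⟩ := Prod.mk.inj h
    obtain rfl : i = j := Fin.ext (congrArg Sigma.fst h1)
    simp only [Sigma.mk.injEq, heq_eq_eq, true_and] at h1 h2
    rw [h1, h2]
  have hspan : (⨆ i ∈ Finset.range (N + 1),
        Submodule.map₂ (TensorProduct.mk k V W) (A i) (B (N - i))) =
      Submodule.span k (Set.range (b ∘ e)) := by
    have hAs : ∀ i, A i = Submodule.span k (Set.range fun a => ((bA i a : A i) : V)) := by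
      intro i
      have := congrArg (Submodule.map (A i).subtype) (bA i).span_eq
      rw [Submodule.map_span, Submodule.map_top, Submodule.range_subtype, ← Set.range_comp] at this
      exact this.symm
    have hBs : ∀ i, B i = Submodule.span k (Set.range fun a => ((bB i a : B i) : W)) := by
      intro i
      have := congrArg (Submodule.map (B i).subtype) (bB i).span_eq
      rw [Submodule.map_span, Submodule.map_top, Submodule.range_subtype, ← Set.range_comp] at this
      exact this.symm
    have hbe : ∀ x, (b ∘ e) x = ((bA x.1 x.2.1 : A x.1) : V) ⊗ₜ[k]
        ((bB (N - x.1) x.2.2 : B (N - x.1)) : W) := by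
      intro x
      simp only [Function.comp, b, e, Basis.tensorProduct_apply, DirectSum.IsInternal.collectedBasis_coe]
    apply le_antisymm
    · refine iSup₂_le fun i hi => ?_
      rw [Finset.mem_range] at hi
      rw [hAs i, hBs (N - i), Submodule.map₂_span_span, Submodule.span_le]
      rintro _ ⟨_, ⟨a, rfl⟩, _, ⟨c, rfl⟩, rfl⟩
      exact Submodule.subset_span ⟨⟨⟨i, hi⟩, a, c⟩, hbe _⟩
    · rw [Submodule.span_le]
      rintro _ ⟨x, rfl⟩
      rw [hbe]
      exact Submodule.mem_iSup_of_mem x.1.1 (Submodule.mem_iSup_of_mem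
        (Finset.mem_range.2 x.1.2) (Submodule.apply_mem_map₂ _ (bA _ _).2 (bB _ _).2))
  rw [hspan, finrank_span_eq_card (b.linearIndependent.comp e he), Fintype.card_sigma,
    Finset.sum_range]
  simp

lemma IsStandardGraded.fg {k R : Type*} [Field k] [CommRing R] [Algebra k R]
    {𝒜 : ℕ → Submodule k R} (h : IsStandardGraded k 𝒜) (m : ℕ) : (𝒜 m).FG := by
  induction m with
  | zero => rw [h.degree_zero]; exact Submodule.one_eq_span (R := k) (A := R) ▸ Submodule.fg_span_singleton 1
  | succ m ih => rw [h.succ_eq]; exact h.fg_one.mul ih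

/-- The quotient of a graded algebra by a homogeneous ideal is graded by the images of the
pieces. -/
lemma isInternal_map_mkₐ {k R : Type*} [Field k] [CommRing R] [Algebra k R]
    (𝒜 : ℕ → Submodule k R) [GradedAlgebra 𝒜] (I : Ideal R) (hI : I.IsHomogeneous 𝒜) :
    DirectSum.IsInternal fun i => (𝒜 i).map (Ideal.Quotient.mkₐ k I).toLinearMap := by
  classical
  apply DirectSum.isInternal_submodule_of_iSupIndep_of_iSup_eq_top
  · rw [iSupIndep_iff_finsetSum_eq_zero_imp_eq_zero]
    intro s v hv hs i hi
    -- lift `v i` to `w i ∈ 𝒜 i`; then `∑ w i ∈ I`, and homogeneity puts each `w i` in `I`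
    choose! w hw hwv using hv
    have hmem : ∑ i ∈ s, w i ∈ I := by
      rw [← Ideal.Quotient.eq_zero_iff_mem, map_sum, ← hs]
      exact Finset.sum_congr rfl fun i hi => hwv i hi
    have h := hI i hmem
    rw [← GradedRing.proj_apply, map_sum, Finset.sum_eq_single i] at h
    · rw [← hwv i hi]
      rw [GradedRing.proj_apply, DirectSum.decompose_of_mem_same _ (hw i hi)] at h
      exact Ideal.Quotient.eq_zero_iff_mem.2 h
    · intro j hj hji
      rw [GradedRing.proj_apply, DirectSum.decompose_of_mem_ne _ (hw j hj) hji]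
    · exact fun h => absurd hi h
  · rw [← Submodule.map_iSup, (DirectSum.Decomposition.isInternal 𝒜).submodule_iSup_eq_top,
      Submodule.map_top, LinearMap.range_eq_top]
    exact Ideal.Quotient.mkₐ_surjective k I

/-- In characteristic `p`, the `p ^ n`-th powers of a set of generators of `I` generate
`I^{[p ^ n]}`, since `a ↦ a ^ (p ^ n)` is a ring homomorphism. -/
lemma frobeniusPower_span {A : Type*} [CommRing A] (p : ℕ) [ExpChar A p] (n : ℕ) (s : Set A) :
    frobeniusPower (Ideal.span s) (p ^ n) = Ideal.span ((fun a => a ^ p ^ n) '' s) := by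
  apply le_antisymm
  · rw [frobeniusPower, Ideal.span_le]
    rintro _ ⟨a, ha, rfl⟩
    have : Ideal.span s ≤ (Ideal.span ((fun a => a ^ p ^ n) '' s)).comap (iterateFrobenius A p n) := by
      rw [Ideal.span_le]
      exact fun a ha => Ideal.subset_span ⟨a, ha, rfl⟩
    exact this ha
  · exact Ideal.span_mono (Set.image_mono Ideal.subset_span)

lemma frobeniusPower_isHomogeneous {k R : Type*} [Field k] [CommRing R] [Algebra k R]
    (𝒜 : ℕ → Submodule k R) [GradedAlgebra 𝒜] (p : ℕ) [ExpChar R p] (n : ℕ)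
    (I : Ideal R) (hI : I.IsHomogeneous 𝒜) : (frobeniusPower I (p ^ n)).IsHomogeneous 𝒜 := by
  obtain ⟨s, rfl⟩ := (Ideal.IsHomogeneous.iff_exists 𝒜 I).1 hI
  rw [frobeniusPower_span]
  apply Ideal.homogeneous_span
  rintro _ ⟨_, ⟨⟨a, i, hi⟩, -, rfl⟩, rfl⟩
  exact ⟨_, SetLike.pow_mem_graded (p ^ n) hi⟩

lemma frobeniusPower_boxIdeal {k R S : Type*} [Field k] [CommRing R] [CommRing S]
    [Algebra k R] [Algebra k S] (p : ℕ) [ExpChar (R ⊗[k] S) p] (n : ℕ)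
    (I : Ideal R) (J : Ideal S) :
    frobeniusPower (boxIdeal k I J) (p ^ n) =
      boxIdeal k (frobeniusPower I (p ^ n)) (frobeniusPower J (p ^ n)) := by
  rw [boxIdeal, Ideal.map, Ideal.map, ← Ideal.span_union, frobeniusPower_span, boxIdeal,
    frobeniusPower, frobeniusPower, Ideal.map_span, Ideal.map_span, ← Ideal.span_union,
    Set.image_union, Set.image_image, Set.image_image, Set.image_image, Set.image_image]
  simp only [map_pow]

lemma finrank_map_eq_of_ker_eq {k V W W' : Type*} [Field k] [AddCommGroup V] [AddCommGroup W]
    [AddCommGroup W'] [Module k V] [Module k W] [Module k W'] (f : V →ₗ[k] W) (g : V →ₗ[k] W')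
    (h : LinearMap.ker f = LinearMap.ker g) (P : Submodule k V) :
    Module.finrank k (P.map f) = Module.finrank k (P.map g) := by
  have hk : LinearMap.ker (f.domRestrict P) = LinearMap.ker (g.domRestrict P) := by
    ext x
    have := SetLike.ext_iff.1 h (x : V)
    simpa using this
  rw [← LinearMap.range_domRestrict, ← LinearMap.range_domRestrict]
  exact (((f.domRestrict P).quotKerEquivRange.symm.trans (Submodule.quotEquivOfEq _ _ hk)).trans
    (g.domRestrict P).quotKerEquivRange).finrank_eq

/-- The Hilbert function of `(R ⊗ S) / (I ⊠ J) ≅ R/I ⊗ S/J` is the Cauchy product of the Hilbert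
functions of `R/I` and `S/J`. -/
lemma quotPieceDim_boxIdeal {k R S : Type*} [Field k] [CommRing R] [CommRing S]
    [Algebra k R] [Algebra k S] (𝒜 : ℕ → Submodule k R) (ℬ : ℕ → Submodule k S)
    [GradedAlgebra 𝒜] [GradedAlgebra ℬ]
    (hstdR : IsStandardGraded k 𝒜) (hstdS : IsStandardGraded k ℬ)
    (I : Ideal R) (J : Ideal S) (hI : I.IsHomogeneous 𝒜) (hJ : J.IsHomogeneous ℬ) (N : ℕ) :
    quotPieceDim k (tensorPiece k 𝒜 ℬ N) (boxIdeal k I J) =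
      ∑ i ∈ Finset.range (N + 1), quotPieceDim k (𝒜 i) I * quotPieceDim k (ℬ (N - i)) J := by
  let πI := Ideal.Quotient.mkₐ k I
  let πJ := Ideal.Quotient.mkₐ k J
  let φ : R ⊗[k] S →ₐ[k] (R ⧸ I) ⊗[k] (S ⧸ J) := Algebra.TensorProduct.map πI πJ
  have hker : RingHom.ker φ = boxIdeal k I J := by
    have h := Algebra.TensorProduct.map_ker πI πJ (Ideal.Quotient.mkₐ_surjective k I)
      (Ideal.Quotient.mkₐ_surjective k J)
    rw [show RingHom.ker πI = I from Ideal.Quotient.mkₐ_ker k I,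
      show RingHom.ker πJ = J from Ideal.Quotient.mkₐ_ker k J] at h
    exact h
  have h1 : quotPieceDim k (tensorPiece k 𝒜 ℬ N) (boxIdeal k I J) =
      Module.finrank k ((tensorPiece k 𝒜 ℬ N).map φ.toLinearMap) := by
    apply finrank_map_eq_of_ker_eq
    ext x
    have hx := SetLike.ext_iff.1 hker x
    rw [RingHom.mem_ker] at hx
    rw [LinearMap.mem_ker, LinearMap.mem_ker]
    exact Ideal.Quotient.eq_zero_iff_mem.trans hx.symm
  have h2 : (tensorPiece k 𝒜 ℬ N).map φ.toLinearMap = ⨆ i ∈ Finset.range (N + 1),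
      Submodule.map₂ (TensorProduct.mk k (R ⧸ I) (S ⧸ J)) ((𝒜 i).map πI.toLinearMap)
        ((ℬ (N - i)).map πJ.toLinearMap) := by
    simp only [tensorPiece, Submodule.map_iSup]
    refine iSup_congr fun i => iSup_congr fun _ => ?_
    rw [Submodule.map_mul, ← Submodule.map_comp, ← Submodule.map_comp]
    apply le_antisymm
    · rw [Submodule.mul_le]
      rintro _ ⟨a, ha, rfl⟩ _ ⟨b, hb, rfl⟩
      have : (φ.toLinearMap ∘ₗ Algebra.TensorProduct.includeLeft.toLinearMap) a *
          (φ.toLinearMap ∘ₗ Algebra.TensorProduct.includeRight.toLinearMap) b =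
          TensorProduct.mk k (R ⧸ I) (S ⧸ J) (πI a) (πJ b) := by
        simp [φ]
      rw [this]
      exact Submodule.apply_mem_map₂ _ (Submodule.mem_map_of_mem ha) (Submodule.mem_map_of_mem hb)
    · rw [Submodule.map₂_le]
      rintro _ ⟨a, ha, rfl⟩ _ ⟨b, hb, rfl⟩
      have : TensorProduct.mk k (R ⧸ I) (S ⧸ J) (πI a) (πJ b) =
          (φ.toLinearMap ∘ₗ Algebra.TensorProduct.includeLeft.toLinearMap) a *
          (φ.toLinearMap ∘ₗ Algebra.TensorProduct.includeRight.toLinearMap) b := by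
        simp [φ]
      change TensorProduct.mk k (R ⧸ I) (S ⧸ J) (πI a) (πJ b) ∈ _
      rw [this]
      exact Submodule.mul_mem_mul (Submodule.mem_map_of_mem ha) (Submodule.mem_map_of_mem hb)
  rw [h1, h2, finrank_iSup_map₂_mk _ _ (isInternal_map_mkₐ 𝒜 I hI) (isInternal_map_mkₐ ℬ J hJ)]
  · rfl
  · exact fun i => Module.Finite.iff_fg.2 ((hstdR.fg i).map _)
  · exact fun i => Module.Finite.iff_fg.2 ((hstdS.fg i).map _)

/-! ### Riemann sums and convolutions -/

/-- Left-endpoint Riemann sums of mesh `1/q` over `[0, x₀]`, for `q x₀` an integer, approximate the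
integral once `q` is large. The sum carries one extra term, at the right endpoint `x₀`, whose
weight `1/q` makes it negligible. -/
lemma abs_riemannSum_sub_integral_le {h : ℝ → ℝ} (hu : UniformContinuous h) {x₀ : ℝ}
    (hx₀ : 0 ≤ x₀) {ε : ℝ} (hε : 0 < ε) :
    ∃ Q : ℝ, 0 < Q ∧ ∀ q N : ℕ, Q ≤ q → (N : ℝ) = q * x₀ →
      |(q : ℝ)⁻¹ * ∑ i ∈ Finset.range (N + 1), h (i / q) - ∫ y in (0 : ℝ)..x₀, h y| ≤ ε := by
  obtain ⟨δ, hδ, hδh⟩ := Metric.uniformContinuous_iff.1 hu (ε / (2 * (x₀ + 1))) (by positivity)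
  -- `2 / δ` makes the mesh smaller than `δ`; `2 * |h x₀| / ε` controls the endpoint term
  refine ⟨max (2 / δ) (2 * |h x₀| / ε), lt_max_of_lt_left (by positivity), fun q N hq hN => ?_⟩
  have hq1 : 2 / δ ≤ q := (le_max_left _ _).trans hq
  have hq2 : 2 * |h x₀| / ε ≤ q := (le_max_right _ _).trans hq
  have hq0 : (0 : ℝ) < q := lt_of_lt_of_le (by positivity) hq1
  have hNx : (N : ℝ) / q = x₀ := by rw [hN]; field_simp
  have hsplit : ∫ y in (0 : ℝ)..x₀, h y =
      ∑ i ∈ Finset.range N, ∫ y in ((i : ℝ) / q)..((i + 1 : ℕ) : ℝ) / q, h y := by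
    rw [intervalIntegral.sum_integral_adjacent_intervals (a := fun i : ℕ => (i : ℝ) / q)
      fun i _ => hu.continuous.intervalIntegrable _ _]
    simp [hNx]
  have hterm : ∀ i ∈ Finset.range N,
      |(q : ℝ)⁻¹ * h (i / q) - ∫ y in ((i : ℝ) / q)..((i + 1 : ℕ) : ℝ) / q, h y| ≤
        ε / (2 * (x₀ + 1)) * (q : ℝ)⁻¹ := by
    intro i _
    have hlen : ((i + 1 : ℕ) : ℝ) / q - (i : ℝ) / q = (q : ℝ)⁻¹ := by
      push_cast; field_simp; ring
    have hconst : (q : ℝ)⁻¹ * h (i / q) =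
        ∫ _ in ((i : ℝ) / q)..((i + 1 : ℕ) : ℝ) / q, h (i / q) := by
      rw [intervalIntegral.integral_const, hlen, smul_eq_mul]
    rw [hconst, ← intervalIntegral.integral_sub (by simp)
      (hu.continuous.intervalIntegrable _ _), ← Real.norm_eq_abs]
    refine (intervalIntegral.norm_integral_le_of_norm_le_const (C := ε / (2 * (x₀ + 1)))
      fun y hy => ?_).trans_eq ?_
    · have hle : (i : ℝ) / q ≤ ((i + 1 : ℕ) : ℝ) / q := by
        have : (0 : ℝ) < (q : ℝ)⁻¹ := by positivity
        linarith
      rw [Set.uIoc_of_le hle] at hy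
      rw [← dist_eq_norm]
      refine (hδh ?_).le
      rw [dist_comm, Real.dist_eq, abs_of_pos (by linarith [hy.1])]
      have : (q : ℝ)⁻¹ < δ := by
        rw [inv_lt_comm₀ hq0 hδ]
        refine lt_of_lt_of_le ?_ hq1
        rw [inv_eq_one_div]
        gcongr
        norm_num
      linarith [hy.2]
    · rw [hlen, abs_of_pos (by positivity)]
  rw [hsplit, Finset.sum_range_succ, mul_add, Finset.mul_sum, hNx, add_sub_right_comm,
    ← Finset.sum_sub_distrib]
  refine (abs_add_le _ _).trans ?_
  have e1 := (Finset.abs_sum_le_sum_abs _ _).trans (Finset.sum_le_sum hterm)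
  rw [Finset.sum_const, Finset.card_range, nsmul_eq_mul] at e1
  have e2 : (N : ℝ) * (ε / (2 * (x₀ + 1)) * (q : ℝ)⁻¹) ≤ ε / 2 := by
    have : (N : ℝ) * (ε / (2 * (x₀ + 1)) * (q : ℝ)⁻¹) = ε / 2 * (x₀ / (x₀ + 1)) := by
      rw [hN]; field_simp
    rw [this]
    refine mul_le_of_le_one_right (by positivity) ?_
    rw [div_le_one (by positivity)]
    linarith
  have e3 : |(q : ℝ)⁻¹ * h x₀| ≤ ε / 2 := by
    rw [abs_mul, abs_of_pos (by positivity : (0 : ℝ) < (q : ℝ)⁻¹), inv_mul_le_iff₀ hq0]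
    rw [div_le_iff₀ hε] at hq2
    linarith
  linarith

/-- Discrete convolutions of uniformly convergent sequences of functions converge to the
convolution of the limits, along meshes `1 / q n` dividing `x₀`. -/
lemma tendsto_sum_convolution {F G : ℕ → ℝ → ℝ} {f g : ℝ → ℝ}
    (hfc : Continuous f) (hfsupp : HasCompactSupport f)
    (hgc : Continuous g) (hgsupp : HasCompactSupport g)
    (hF : TendstoUniformlyOn F f atTop (Set.Ici 0))
    (hG : TendstoUniformlyOn G g atTop (Set.Ici 0)) {x₀ : ℝ} (hx₀ : 0 ≤ x₀)
    {q N : ℕ → ℕ} (hq : Tendsto (fun n => (q n : ℝ)) atTop atTop)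
    (hN : ∀ᶠ n in atTop, (N n : ℝ) = q n * x₀) :
    Tendsto (fun n => (q n : ℝ)⁻¹ *
        ∑ i ∈ Finset.range (N n + 1), F n (i / q n) * G n (x₀ - i / q n)) atTop
      (nhds (∫ y in (0 : ℝ)..x₀, f y * g (x₀ - y))) := by
  obtain ⟨M₁, hM₁⟩ := hfc.bounded_above_of_compact_support hfsupp
  obtain ⟨M₂, hM₂⟩ := hgc.bounded_above_of_compact_support hgsupp
  obtain ⟨M, hM0, hMf, hMg⟩ : ∃ M : ℝ, 0 ≤ M ∧ (∀ y, |f y| ≤ M) ∧ ∀ y, |g y| ≤ M :=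
    ⟨max M₁ M₂, le_max_of_le_left ((norm_nonneg _).trans (hM₁ 0)),
      fun y => (hM₁ y).trans (le_max_left _ _), fun y => (hM₂ y).trans (le_max_right _ _)⟩
  have hcs : HasCompactSupport fun y => f y * g (x₀ - y) := hfsupp.mul_right
  have hu : UniformContinuous fun y => f y * g (x₀ - y) :=
    hcs.uniformContinuous_of_continuous (by fun_prop)
  rw [Metric.tendsto_atTop]
  intro ε hε
  -- `(x₀ + 1) * η` pays for replacing `F n`, `G n` by `f`, `g` in all terms, and a further `η`
  -- for the Riemann sum; `x₀ + 3` leaves room for a strict inequality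
  set η := ε / (x₀ + 3) with hη
  have hη0 : 0 < η := by positivity
  obtain ⟨Q, hQ0, hQ⟩ := abs_riemannSum_sub_integral_le hu hx₀ hη0
  -- chosen so that `δ * (M + δ) + M * δ ≤ η`, the bound for the error of a product
  set δ := min 1 (η / (2 * M + 1)) with hδ
  have hδ0 : 0 < δ := lt_min one_pos (by positivity)
  have hδ1 : δ ≤ 1 := min_le_left _ _
  have hδ2 : δ * (2 * M + 1) ≤ η := (le_div_iff₀ (by positivity)).1 (min_le_right _ _)
  rw [← eventually_atTop]
  filter_upwards [hN, hq.eventually_ge_atTop (max Q 1), Metric.tendstoUniformlyOn_iff.1 hF δ hδ0,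
    Metric.tendstoUniformlyOn_iff.1 hG δ hδ0] with n hNn hqn hFn hGn
  have hq1 : (1 : ℝ) ≤ q n := (le_max_right _ _).trans hqn
  have hq0 : (0 : ℝ) < q n := by linarith
  have hR := hQ (q n) (N n) ((le_max_left _ _).trans hqn) hNn
  have hterm : ∀ i ∈ Finset.range (N n + 1), |F n (i / q n) * G n (x₀ - i / q n) -
      f (i / q n) * g (x₀ - i / q n)| ≤ η := by
    intro i hi
    have h1 := (hFn (i / q n) (Set.mem_Ici.2 (by positivity))).le
    have h2 : (0 : ℝ) ≤ x₀ - i / q n := by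
      rw [sub_nonneg, div_le_iff₀ hq0, mul_comm, ← hNn]
      exact_mod_cast Nat.lt_succ_iff.1 (Finset.mem_range.1 hi)
    have h3 := (hGn _ (Set.mem_Ici.2 h2)).le
    rw [dist_comm, Real.dist_eq] at h1 h3
    have hG' : |G n (x₀ - i / q n)| ≤ M + δ := by
      have := abs_add_le (g (x₀ - i / q n)) (G n (x₀ - i / q n) - g (x₀ - i / q n))
      rw [add_sub_cancel] at this
      linarith [hMg (x₀ - i / q n)]
    have hid : F n (i / q n) * G n (x₀ - i / q n) - f (i / q n) * g (x₀ - i / q n) =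
        (F n (i / q n) - f (i / q n)) * G n (x₀ - i / q n) +
        f (i / q n) * (G n (x₀ - i / q n) - g (x₀ - i / q n)) := by ring
    rw [hid]
    refine (abs_add_le _ _).trans ?_
    rw [abs_mul, abs_mul]
    have k1 := mul_le_mul h1 hG' (abs_nonneg _) hδ0.le
    have k2 := mul_le_mul (hMf (i / q n)) h3 (abs_nonneg _) hM0
    have k3 : δ * δ ≤ δ := mul_le_of_le_one_right hδ0.le hδ1
    nlinarith
  have hS : |(q n : ℝ)⁻¹ * ∑ i ∈ Finset.range (N n + 1), F n (i / q n) * G n (x₀ - i / q n) -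
      (q n : ℝ)⁻¹ * ∑ i ∈ Finset.range (N n + 1), f (i / q n) * g (x₀ - i / q n)| ≤
        (x₀ + 1) * η := by
    rw [← mul_sub, ← Finset.sum_sub_distrib, abs_mul,
      abs_of_pos (by positivity : (0 : ℝ) < (q n : ℝ)⁻¹), inv_mul_le_iff₀ hq0]
    refine ((Finset.abs_sum_le_sum_abs _ _).trans (Finset.sum_le_sum hterm)).trans ?_
    rw [Finset.sum_const, Finset.card_range, nsmul_eq_mul]
    push_cast
    rw [hNn, ← mul_assoc, mul_add, mul_one]
    gcongr
  rw [Real.dist_eq]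
  refine (abs_sub_le _ ((q n : ℝ)⁻¹ * ∑ i ∈ Finset.range (N n + 1),
    f (i / q n) * g (x₀ - i / q n)) _).trans_lt ?_
  have : (x₀ + 3) * η = ε := by rw [hη]; field_simp
  linarith

/-! ### Convergence at points of `Λ` -/

/-- When `q x₀ = N` is an integer, the normalized Hilbert function of `(R ⊗ S, I ⊠ J)` at `x₀` is
the discrete convolution with mesh `1/q` of those of `(R, I)` and `(S, J)`. -/
lemma normHilb_tensor_eq {k : Type*} [Field k] {p : ℕ} (hp : p.Prime) [CharP k p]
    {R S : Type*} [CommRing R] [CommRing S] [Nontrivial R] [Nontrivial S]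
    [Algebra k R] [Algebra k S]
    (𝒜 : ℕ → Submodule k R) (ℬ : ℕ → Submodule k S) [GradedAlgebra 𝒜] [GradedAlgebra ℬ]
    (hstdR : IsStandardGraded k 𝒜) (hstdS : IsStandardGraded k ℬ) (d d' : ℕ)
    (I : Ideal R) (J : Ideal S)
    (hIhom : Ideal.IsHomogeneous 𝒜 I) (hJhom : Ideal.IsHomogeneous ℬ J)
    {x₀ : ℝ} (hx₀ : 0 ≤ x₀) (n N : ℕ) (hN : (N : ℝ) = (p ^ n : ℕ) * x₀) :
    normHilb k (tensorPiece k 𝒜 ℬ) (boxIdeal k I J) (d + d') (p ^ n) x₀ =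
      ((p ^ n : ℕ) : ℝ)⁻¹ * ∑ i ∈ Finset.range (N + 1),
        normHilb k 𝒜 I d (p ^ n) (i / (p ^ n : ℕ)) *
          normHilb k ℬ J d' (p ^ n) (x₀ - i / (p ^ n : ℕ)) := by
  have : ExpChar k p := ExpChar.prime hp
  have : ExpChar R p := expChar_of_injective_algebraMap (algebraMap k R).injective p
  have : ExpChar S p := expChar_of_injective_algebraMap (algebraMap k S).injective p
  have : ExpChar (R ⊗[k] S) p :=
    expChar_of_injective_algebraMap (algebraMap k (R ⊗[k] S)).injective p
  have hbox : quotPieceDim k (tensorPiece k 𝒜 ℬ N) (frobeniusPower (boxIdeal k I J) (p ^ n)) =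
      ∑ i ∈ Finset.range (N + 1), quotPieceDim k (𝒜 i) (frobeniusPower I (p ^ n)) *
        quotPieceDim k (ℬ (N - i)) (frobeniusPower J (p ^ n)) := by
    rw [frobeniusPower_boxIdeal, quotPieceDim_boxIdeal 𝒜 ℬ hstdR hstdS _ _
      (frobeniusPower_isHomogeneous 𝒜 p n I hIhom) (frobeniusPower_isHomogeneous ℬ p n J hJhom)]
  have hq0 : (0 : ℝ) < (p ^ n : ℕ) := by exact_mod_cast pow_pos hp.pos n
  generalize p ^ n = q at *
  have hterm : ∀ i ∈ Finset.range (N + 1),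
      normHilb k 𝒜 I d q (i / q) * normHilb k ℬ J d' q (x₀ - i / q) =
        ((q : ℝ) ^ ((1 : ℤ) - d) * (q : ℝ) ^ ((1 : ℤ) - d')) *
        (quotPieceDim k (𝒜 i) (frobeniusPower I q) *
          quotPieceDim k (ℬ (N - i)) (frobeniusPower J q) : ℕ) := by
    intro i hi
    have hiN : i ≤ N := Nat.lt_succ_iff.1 (Finset.mem_range.1 hi)
    have e1 : (q : ℝ) * (i / q) = i := by field_simp
    have e2 : (q : ℝ) * (x₀ - i / q) = (N - i : ℕ) := by
      rw [mul_sub, e1, ← hN, Nat.cast_sub hiN]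
    have h2 : ¬ (x₀ - i / q < 0) := by
      intro h
      have := mul_neg_of_pos_of_neg hq0 h
      rw [e2] at this
      exact absurd this (Nat.cast_nonneg _).not_gt
    have h1 : ¬ ((i : ℝ) / q < 0) := not_lt.2 (by positivity)
    simp only [normHilb, if_neg h1, if_neg h2, e1, e2, Nat.floor_natCast]
    push_cast
    ring
  rw [Finset.sum_congr rfl hterm, ← Finset.mul_sum, ← Nat.cast_sum, ← hbox, ← mul_assoc]
  simp only [normHilb, if_neg (not_lt.2 hx₀), ← hN, Nat.floor_natCast]
  congr 1
  rw [← zpow_neg_one, ← zpow_add₀ hq0.ne', ← zpow_add₀ hq0.ne']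
  congr 1
  push_cast
  ring

/-- For standard graded rings `R, S` of Krull dimensions `d, d' ≥ 2` over a perfect field `k`
of characteristic `p > 0` and homogeneous ideals `I ⊆ R`, `J ⊆ S` of finite colength, if the
normalized Hilbert functions of `(R, I)` and `(S, J)` converge uniformly on `[0, ∞)` to
compactly supported continuous functions `f` and `g`, then for every point `x₀` of
`Λ = {m/p^s : m, s ∈ ℕ}`, the sequence `f_n(R ⊗_k S, I ⊠ J)(x₀)` converges, with limit
`(f*g)(x₀) = ∫_0^{x₀} f(y) g(x₀−y) dy`. -/
theorem tendsto_normHilb_tensor_at_lambda {k : Type*} [Field k] [PerfectField k] {p : ℕ}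
    (hp : p.Prime) [CharP k p] {R S : Type*} [CommRing R] [CommRing S]
    [Algebra k R] [Algebra k S]
    (𝒜 : ℕ → Submodule k R) (ℬ : ℕ → Submodule k S) [GradedAlgebra 𝒜] [GradedAlgebra ℬ]
    (hstdR : IsStandardGraded k 𝒜) (hstdS : IsStandardGraded k ℬ)
    (d d' : ℕ) (hd : 2 ≤ d) (hd' : 2 ≤ d')
    (hdimR : ringKrullDim R = d) (hdimS : ringKrullDim S = d')
    (I : Ideal R) (J : Ideal S)
    (hIhom : Ideal.IsHomogeneous 𝒜 I) (hJhom : Ideal.IsHomogeneous ℬ J)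
    (hIcol : FiniteDimensional k (R ⧸ I)) (hJcol : FiniteDimensional k (S ⧸ J))
    (f g : ℝ → ℝ)
    (hfc : Continuous f) (hfsupp : HasCompactSupport f) (hf0 : ∀ x : ℝ, x < 0 → f x = 0)
    (hgc : Continuous g) (hgsupp : HasCompactSupport g) (hg0 : ∀ x : ℝ, x < 0 → g x = 0)
    (hfu : TendstoUniformlyOn (fun n => normHilb k 𝒜 I d (p ^ n)) f atTop (Set.Ici 0))
    (hgu : TendstoUniformlyOn (fun n => normHilb k ℬ J d' (p ^ n)) g atTop (Set.Ici 0)) :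
    ∀ x₀ : ℝ, (∃ m s : ℕ, x₀ = (m : ℝ) / (p : ℝ) ^ s) →
      Tendsto
          (fun n => normHilb k (tensorPiece k 𝒜 ℬ) (boxIdeal k I J) (d + d') (p ^ n) x₀)
          atTop (nhds (∫ y in (0 : ℝ)..x₀, f y * g (x₀ - y))) ∧
        (∫ y in (0 : ℝ)..x₀, f y * g (x₀ - y)) = ∫ y : ℝ, f y * g (x₀ - y) := by
  -- the zero ring has Krull dimension `⊥`
  have hnR : Nontrivial R := by
    by_contra h
    rw [not_nontrivial_iff_subsingleton] at h
    simp [ringKrullDim_eq_bot_of_subsingleton] at hdimR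
  have hnS : Nontrivial S := by
    by_contra h
    rw [not_nontrivial_iff_subsingleton] at h
    simp [ringKrullDim_eq_bot_of_subsingleton] at hdimS
  rintro x₀ ⟨m, s, rfl⟩
  have hp0 : (0 : ℝ) < p := by exact_mod_cast hp.pos
  have hx₀ : (0 : ℝ) ≤ m / (p : ℝ) ^ s := by positivity
  have hN : ∀ n, s ≤ n → ((m * p ^ (n - s) : ℕ) : ℝ) = (p ^ n : ℕ) * (m / (p : ℝ) ^ s) := by
    intro n hn
    obtain ⟨t, rfl⟩ := Nat.exists_eq_add_of_le hn
    rw [Nat.add_sub_cancel_left]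
    push_cast
    rw [pow_add]
    field_simp
  refine ⟨?_, ?_⟩
  · refine (tendsto_sum_convolution hfc hfsupp hgc hgsupp hfu hgu hx₀
      (q := fun n => p ^ n) (N := fun n => m * p ^ (n - s)) ?_ ?_).congr' ?_
    · exact tendsto_natCast_atTop_atTop.comp (tendsto_pow_atTop_atTop_of_one_lt hp.one_lt)
    · filter_upwards [eventually_ge_atTop s] with n hn using hN n hn
    · filter_upwards [eventually_ge_atTop s] with n hn
      exact (normHilb_tensor_eq hp 𝒜 ℬ hstdR hstdS d d' I J hIhom hJhom hx₀ n _ (hN n hn)).symm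
  · rw [intervalIntegral.integral_of_le hx₀, ← integral_Icc_eq_integral_Ioc]
    apply setIntegral_eq_integral_of_forall_compl_eq_zero
    intro y hy
    rw [Set.mem_Icc, not_and_or, not_le, not_le] at hy
    rcases hy with hy | hy
    · rw [hf0 y hy, zero_mul]
    · rw [hg0 _ (sub_neg.2 hy), mul_zero]
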